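/- Let 0 ≤ θ ≤ 1/4 and for P ≥ 2 put M = P^θ and H = P·M^{−4}. Then for every ε > 0 there exist η > 0 and C > 0 such that for all P ≥ 2 and all R with 1 ≤ R ≤ P^η one has ∫₀¹ |E₀(α)|² dα ≤ C·P^{1+ε}·H·M², where E₀(α) = Σ_{1≤h≤H} Σ_{1≤l≤2P} Σ_{M<m₁<m₂≤MR} e(8α·l·h³·(m₁⁸−m₂⁸)). -/

import Mathlib

open MeasureTheory
open scoped Classical

/-- `e(α) = exp(2πiα)`. -/
noncomputable def eC (α : ℝ) : ℂ := Complex.exp (2 * Real.pi * Complex.I * α)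

/-- With `M = P^θ`, `H = P M⁻⁴`, the exponential sum
`E₀(α) = ∑_{1≤h≤H} ∑_{1≤l≤2P} ∑_{M<m₁<m₂≤MR} e(8α l h³ (m₁⁸ − m₂⁸))`. -/
noncomputable def E0 (P θ R α : ℝ) : ℂ :=
  ∑ h ∈ Finset.Icc (1 : ℤ) ⌊P / (P ^ θ) ^ 4⌋,
    ∑ l ∈ Finset.Icc (1 : ℤ) ⌊2 * P⌋,
      ∑ m₂ ∈ Finset.Icc (⌊P ^ θ⌋ + 1) ⌊P ^ θ * R⌋,
        ∑ m₁ ∈ Finset.Icc (⌊P ^ θ⌋ + 1) (m₂ - 1),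
          eC (8 * α * (l : ℝ) * (h : ℝ) ^ 3 * ((m₁ : ℝ) ^ 8 - (m₂ : ℝ) ^ 8))

/-!
By orthogonality, the mean square of `E₀` counts the pairs of index quadruples `(h, l, m₂, m₁)` with
the same nonzero phase `n = 8 l h³ (m₁⁸ - m₂⁸)`. The numbers `h`, `l` and `m₂ - m₁` divide `n`, and
together with `n` they determine the quadruple, since `m ↦ (m + d)⁸ - m⁸` is strictly increasing.
Since `n` has only `≪ P ^ ε` divisors, each of the `≪ P H M² R²` quadruples shares its phase with
`≪ P ^ (3 ε)` others, and `R² ≤ P ^ (2 η)`.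
-/

theorem natCast_add_one_le_mul_rpow_pow {δ : ℝ} (hδ : 0 < δ) {x : ℝ} (hx : 2 ≤ x) (a : ℕ) :
    (a : ℝ) + 1 ≤ (1 + 2 / δ) * (x ^ δ) ^ a := by
  have h_base : 1 + δ / 2 ≤ x ^ δ := calc
    1 + δ / 2 ≤ Real.log 2 * δ + 1 := by nlinarith [Real.log_two_gt_d9]
    _ ≤ Real.exp (Real.log 2 * δ) := Real.add_one_le_exp _
    _ = 2 ^ δ := (Real.rpow_def_of_pos two_pos δ).symm
    _ ≤ x ^ δ := Real.rpow_le_rpow zero_le_two hx hδ.le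
  have h_extra : 0 ≤ 2 / δ + a * (δ / 2) := by positivity
  calc (a : ℝ) + 1 ≤ (a + 1) + (2 / δ + a * (δ / 2)) := le_add_of_nonneg_right h_extra
    _ = (1 + 2 / δ) * (1 + a * (δ / 2)) := by field_simp; ring
    _ ≤ (1 + 2 / δ) * (1 + δ / 2) ^ a := by
      gcongr
      exact one_add_mul_le_pow (by linarith) a
    _ ≤ (1 + 2 / δ) * (x ^ δ) ^ a := by gcongr

theorem natCast_add_one_le_rpow_pow {δ : ℝ} (hδ : 0 < δ) {x : ℝ} (hx : 2 ^ (1 / δ) ≤ x) (a : ℕ) :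
    (a : ℝ) + 1 ≤ (x ^ δ) ^ a := by
  have h_base : 2 ≤ x ^ δ := calc
    (2 : ℝ) = (2 ^ (1 / δ)) ^ δ := by
      rw [← Real.rpow_mul zero_le_two, one_div_mul_cancel hδ.ne', Real.rpow_one]
    _ ≤ x ^ δ := by gcongr
  calc (a : ℝ) + 1 ≤ 2 ^ a := by exact_mod_cast Nat.lt_two_pow_self (n := a)
    _ ≤ (x ^ δ) ^ a := by gcongr

theorem prod_primeFactors_rpow_pow_factorization {n : ℕ} (hn : n ≠ 0) (δ : ℝ) :
    ∏ p ∈ n.primeFactors, ((p : ℝ) ^ δ) ^ n.factorization p = (n : ℝ) ^ δ := by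
  simp_rw [Real.rpow_pow_comm (Nat.cast_nonneg _)]
  rw [Real.finsetProd_rpow _ _ fun p _ => by positivity]
  congr 1
  exact_mod_cast Nat.prod_factorization_pow_eq_self hn

theorem exists_card_divisors_le_mul_rpow {δ : ℝ} (hδ : 0 < δ) :
    ∃ C > (0 : ℝ), ∀ n : ℕ, n ≠ 0 → (n.divisors.card : ℝ) ≤ C * (n : ℝ) ^ δ := by
  set K : ℝ := 1 + 2 / δ
  have hK1 : 1 ≤ K := le_add_of_nonneg_right (by positivity)
  obtain ⟨B, hB⟩ := exists_nat_ge ((2 : ℝ) ^ (1 / δ))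
  refine ⟨K ^ B, by positivity, fun n hn => ?_⟩
  -- Only the primes below `B` cost a constant factor, and there are at most `B` of them.
  have h_factor : ∀ p ∈ n.primeFactors, (n.factorization p : ℝ) + 1 ≤
      (if p < B then K else 1) * ((p : ℝ) ^ δ) ^ n.factorization p := by
    intro p hp
    split_ifs with hpB
    · have hp2 : (2 : ℝ) ≤ p := by exact_mod_cast (Nat.prime_of_mem_primeFactors hp).two_le
      exact natCast_add_one_le_mul_rpow_pow hδ hp2 _
    · have hBp : (B : ℝ) ≤ p := by exact_mod_cast not_lt.mp hpB
      exact (natCast_add_one_le_rpow_pow hδ (hB.trans hBp) _).trans_eq (one_mul _).symm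
  have h_small : ∏ p ∈ n.primeFactors, (if p < B then K else 1) ≤ K ^ B := by
    rw [← Finset.prod_filter, Finset.prod_const]
    refine pow_le_pow_right₀ hK1 ((Finset.card_le_card fun p hp => ?_).trans_eq
      (Finset.card_range B))
    exact Finset.mem_range.mpr (Finset.mem_filter.mp hp).2
  calc (n.divisors.card : ℝ) = ∏ p ∈ n.primeFactors, ((n.factorization p : ℝ) + 1) := by
        exact_mod_cast Nat.card_divisors hn
    _ ≤ ∏ p ∈ n.primeFactors,
          ((if p < B then K else 1) * ((p : ℝ) ^ δ) ^ n.factorization p) :=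
        Finset.prod_le_prod (fun _ _ => by positivity) h_factor
    _ = (∏ p ∈ n.primeFactors, if p < B then K else 1) * (n : ℝ) ^ δ := by
        rw [Finset.prod_mul_distrib, prod_primeFactors_rpow_pow_factorization hn]
    _ ≤ K ^ B * (n : ℝ) ^ δ := by gcongr

theorem continuous_eC : Continuous eC := by
  unfold eC
  fun_prop

theorem eC_intCast (k : ℤ) : eC k = 1 :=
  Complex.exp_eq_one_iff.mpr ⟨k, by push_cast; ring⟩

theorem eC_mul_conj_eC (a b : ℝ) : eC a * (starRingEnd ℂ) (eC b) = eC (a - b) := by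
  unfold eC
  rw [← Complex.exp_conj, ← Complex.exp_add]
  congr 1
  simp only [map_mul, map_ofNat, Complex.conj_ofReal, Complex.conj_I, Complex.ofReal_sub]
  ring

theorem integral_eC_mul_intCast (k : ℤ) :
    ∫ α in (0 : ℝ)..1, eC (α * k) = if k = 0 then 1 else 0 := by
  split_ifs with hk
  · simp [hk, eC]
  · have h_freq : (2 * Real.pi * Complex.I * k : ℂ) ≠ 0 := by simp [Real.pi_ne_zero, hk]
    have h_period : Complex.exp (2 * Real.pi * Complex.I * k) = 1 := by
      simpa [eC] using eC_intCast k
    calc ∫ α in (0 : ℝ)..1, eC (α * k)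
        = ∫ α in (0 : ℝ)..1, Complex.exp (2 * Real.pi * Complex.I * k * α) := by
          simp only [eC, Complex.ofReal_mul, Complex.ofReal_intCast, mul_assoc, mul_comm]
      _ = 0 := by simp [integral_exp_mul_complex h_freq, h_period]

section MeanSquare

variable {ι : Type*} (S : Finset ι) (f : ι → ℤ)

theorem norm_sq_sum_eC (α : ℝ) :
    ((‖∑ x ∈ S, eC (α * f x)‖ ^ 2 : ℝ) : ℂ) =
      ∑ x ∈ S, ∑ y ∈ S, eC (α * ((f x - f y : ℤ) : ℝ)) := by
  rw [Complex.ofReal_pow, ← Complex.mul_conj', map_sum, Finset.sum_mul_sum]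
  simp_rw [eC_mul_conj_eC, Int.cast_sub, mul_sub]

theorem integral_norm_sq_sum_eC :
    ∫ α in (0 : ℝ)..1, ‖∑ x ∈ S, eC (α * f x)‖ ^ 2 =
      ∑ x ∈ S, ((S.filter fun y => f y = f x).card : ℝ) := by
  have h_cont (k : ℤ) : Continuous fun α : ℝ => eC (α * k) :=
    continuous_eC.comp (continuous_mul_const _)
  apply Complex.ofReal_injective
  calc ((∫ α in (0 : ℝ)..1, ‖∑ x ∈ S, eC (α * f x)‖ ^ 2 : ℝ) : ℂ)
      = ∫ α in (0 : ℝ)..1, ∑ x ∈ S, ∑ y ∈ S, eC (α * ((f x - f y : ℤ) : ℝ)) := by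
        simp_rw [← intervalIntegral.integral_ofReal, norm_sq_sum_eC]
    _ = ∑ x ∈ S, ∑ y ∈ S, ∫ α in (0 : ℝ)..1, eC (α * ((f x - f y : ℤ) : ℝ)) := by
        rw [intervalIntegral.integral_finsetSum fun x _ =>
          (continuous_finsetSum S fun y _ => h_cont _).intervalIntegrable _ _]
        exact Finset.sum_congr rfl fun x _ =>
          intervalIntegral.integral_finsetSum fun y _ => (h_cont _).intervalIntegrable _ _
    _ = ∑ x ∈ S, ∑ y ∈ S, if f y = f x then 1 else 0 := by
        simp_rw [integral_eC_mul_intCast, sub_eq_zero, eq_comm]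
    _ = ((∑ x ∈ S, ((S.filter fun y => f y = f x).card : ℝ) : ℝ) : ℂ) := by
        simp only [Finset.sum_boole, Complex.ofReal_sum, Complex.ofReal_natCast]

theorem integral_norm_sq_sum_eC_le {K : ℝ}
    (hK : ∀ x ∈ S, ((S.filter fun y => f y = f x).card : ℝ) ≤ K) :
    ∫ α in (0 : ℝ)..1, ‖∑ x ∈ S, eC (α * f x)‖ ^ 2 ≤ K * S.card := by
  rw [integral_norm_sq_sum_eC, mul_comm, ← nsmul_eq_mul]
  exact Finset.sum_le_card_nsmul _ _ _ hK

end MeanSquare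

theorem strictMonoOn_add_pow_sub_pow {R : Type*} [CommRing R] [LinearOrder R]
    [IsStrictOrderedRing R] {d : R} (hd : 0 < d) {k : ℕ} (hk : 2 ≤ k) :
    StrictMonoOn (fun a : R => (a + d) ^ k - a ^ k) (Set.Ici 0) := by
  intro a (ha : 0 ≤ a) b _ hab
  have h_geom (x : R) : (x + d) ^ k - x ^ k =
      d * ∑ i ∈ Finset.range k, (x + d) ^ i * x ^ (k - 1 - i) := by
    rw [← (Commute.all (x + d) x).mul_geom_sum₂, add_sub_cancel_left]
  simp only [h_geom]
  have hb : 0 ≤ b := ha.trans hab.le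
  refine mul_lt_mul_of_pos_left (Finset.sum_lt_sum (fun i _ => by gcongr) ⟨k - 1, ?_, ?_⟩) hd
  · exact Finset.mem_range.mpr (by omega)
  · simpa using pow_lt_pow_left₀ (by gcongr : a + d < b + d) (by positivity) (by omega)

/-- The quadruples `(h, l, m₂, m₁)` with `1 ≤ h ≤ H`, `1 ≤ l ≤ L` and `M < m₁ < m₂ ≤ N`, over which
`E₀` is summed. The larger variable `m₂` stands before `m₁`, as in the order of summation in
`E0`. -/
noncomputable def phaseBox (H L M N : ℝ) : Finset (ℤ × ℤ × ℤ × ℤ) :=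
  (Finset.Icc 1 ⌊H⌋ ×ˢ Finset.Icc 1 ⌊L⌋ ×ˢ Finset.Icc (⌊M⌋ + 1) ⌊N⌋ ×ˢ
    Finset.Icc (⌊M⌋ + 1) ⌊N⌋).filter fun x => x.2.2.2 < x.2.2.1

/-- The phase `c l h ^ j (m₁ ^ k - m₂ ^ k)` at `x = (h, l, m₂, m₁)`; the phases of `E₀` are those
with `c = 8`, `j = 3` and `k = 8`. -/
def phase (c : ℤ) (j k : ℕ) (x : ℤ × ℤ × ℤ × ℤ) : ℤ :=
  c * x.2.1 * x.1 ^ j * (x.2.2.2 ^ k - x.2.2.1 ^ k)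

theorem E0_eq_sum_phaseBox (P θ R α : ℝ) :
    E0 P θ R α = ∑ x ∈ phaseBox (P / (P ^ θ) ^ 4) (2 * P) (P ^ θ) (P ^ θ * R),
      eC (α * phase 8 3 8 x) := by
  simp only [E0, phaseBox, Finset.sum_filter, Finset.sum_product]
  refine Finset.sum_congr rfl fun h _ => Finset.sum_congr rfl fun l _ =>
    Finset.sum_congr rfl fun m₂ hm₂ => ?_
  have h_range : Finset.Icc (⌊P ^ θ⌋ + 1) (m₂ - 1) =
      (Finset.Icc (⌊P ^ θ⌋ + 1) ⌊P ^ θ * R⌋).filter fun m₁ => m₁ < m₂ := by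
    ext m₁
    simp only [Finset.mem_Icc, Finset.mem_filter] at hm₂ ⊢
    omega
  rw [← Finset.sum_filter, h_range]
  refine Finset.sum_congr rfl fun m₁ _ => congrArg eC ?_
  simp only [phase]
  push_cast
  ring

section PhaseBox

variable {H L M N : ℝ}

theorem mem_phaseBox {h l m₂ m₁ : ℤ} :
    (h, l, m₂, m₁) ∈ phaseBox H L M N ↔
      (1 ≤ h ∧ (h : ℝ) ≤ H) ∧ (1 ≤ l ∧ (l : ℝ) ≤ L) ∧ M < m₁ ∧ m₁ < m₂ ∧ (m₂ : ℝ) ≤ N := by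
  simp only [phaseBox, Finset.mem_filter, Finset.mem_product, Finset.mem_Icc, Int.add_one_le_iff,
    Int.floor_lt, Int.le_floor]
  constructor
  · rintro ⟨⟨hh, hl, ⟨-, hm₂⟩, hm₁, -⟩, hlt⟩
    exact ⟨hh, hl, hm₁, hlt, hm₂⟩
  · rintro ⟨hh, hl, hm₁, hlt, hm₂⟩
    have hlt' : (m₁ : ℝ) < m₂ := by exact_mod_cast hlt
    exact ⟨⟨hh, hl, ⟨hm₁.trans hlt', hm₂⟩, hm₁, hlt'.le.trans hm₂⟩, hlt⟩

theorem card_Icc_floor_le {a : ℤ} (ha : 1 ≤ a) {y : ℝ} (hy : 0 ≤ y) :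
    ((Finset.Icc a ⌊y⌋).card : ℝ) ≤ y := by
  have h_sub : (Finset.Icc a ⌊y⌋).card ≤ (Finset.Icc 1 ⌊y⌋).card :=
    Finset.card_le_card (Finset.Icc_subset_Icc_left ha)
  calc ((Finset.Icc a ⌊y⌋).card : ℝ) ≤ ⌊y⌋₊ := by
        exact_mod_cast h_sub.trans_eq (by simp [Int.floor_toNat])
    _ ≤ y := Nat.floor_le hy

theorem card_phaseBox_le (hH : 0 ≤ H) (hL : 0 ≤ L) (hM : 0 ≤ M) (hN : 0 ≤ N) :
    ((phaseBox H L M N).card : ℝ) ≤ H * L * N ^ 2 := by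
  have hM1 : 1 ≤ ⌊M⌋ + 1 := by simpa using Int.floor_nonneg.mpr hM
  calc ((phaseBox H L M N).card : ℝ)
      ≤ (Finset.Icc 1 ⌊H⌋).card * ((Finset.Icc 1 ⌊L⌋).card *
          ((Finset.Icc (⌊M⌋ + 1) ⌊N⌋).card * (Finset.Icc (⌊M⌋ + 1) ⌊N⌋).card)) := by
        simp only [← Nat.cast_mul, ← Finset.card_product]
        exact_mod_cast Finset.card_filter_le _ _
    _ ≤ H * (L * (N * N)) := by
        gcongr
        exacts [card_Icc_floor_le le_rfl hH, card_Icc_floor_le le_rfl hL,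
          card_Icc_floor_le hM1 hN, card_Icc_floor_le hM1 hN]
    _ = H * L * N ^ 2 := by ring

variable {c : ℤ} {j k : ℕ} {x : ℤ × ℤ × ℤ × ℤ}

theorem phase_ne_zero (hM : 0 ≤ M) (hc : c ≠ 0) (hk : k ≠ 0) (hx : x ∈ phaseBox H L M N) :
    phase c j k x ≠ 0 := by
  obtain ⟨h, l, m₂, m₁⟩ := x
  obtain ⟨⟨hh, -⟩, ⟨hl, -⟩, hm₁, hlt, -⟩ := mem_phaseBox.mp hx
  have hm₁0 : 0 ≤ m₁ := by exact_mod_cast (hM.trans_lt hm₁).le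
  have h_diff : m₁ ^ k - m₂ ^ k ≠ 0 := (sub_neg.mpr (pow_lt_pow_left₀ hlt hm₁0 hk)).ne
  exact mul_ne_zero (by positivity) h_diff

theorem natAbs_phase_le (hM : 0 ≤ M) (hx : x ∈ phaseBox H L M N) :
    ((phase c j k x).natAbs : ℝ) ≤ |(c : ℝ)| * (L * H ^ j * N ^ k) := by
  obtain ⟨h, l, m₂, m₁⟩ := x
  obtain ⟨⟨hh, hhH⟩, ⟨hl, hlL⟩, hm₁, hlt, hm₂⟩ := mem_phaseBox.mp hx
  have hh0 : (0 : ℝ) ≤ h := by exact_mod_cast zero_le_one.trans hh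
  have hl0 : (0 : ℝ) ≤ l := by exact_mod_cast zero_le_one.trans hl
  have hm₁0 : (0 : ℝ) ≤ m₁ := (hM.trans_lt hm₁).le
  have hlt' : (m₁ : ℝ) ≤ m₂ := by exact_mod_cast hlt.le
  have h_diff : |(m₁ : ℝ) ^ k - (m₂ : ℝ) ^ k| ≤ N ^ k := by
    rw [abs_sub_comm, abs_of_nonneg (sub_nonneg.mpr (by gcongr))]
    exact (sub_le_self _ (by positivity)).trans (pow_le_pow_left₀ (hm₁0.trans hlt') hm₂ k)
  calc ((phase c j k (h, l, m₂, m₁)).natAbs : ℝ)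
      = |(c : ℝ)| * (l * h ^ j * |(m₁ : ℝ) ^ k - (m₂ : ℝ) ^ k|) := by
        rw [Nat.cast_natAbs, phase]
        push_cast
        rw [abs_mul, abs_mul, abs_mul, abs_of_nonneg hl0, abs_of_nonneg (pow_nonneg hh0 j)]
        ring
    _ ≤ |(c : ℝ)| * (L * H ^ j * N ^ k) := by
        have hL0 : 0 ≤ L := hl0.trans hlL
        have hH0 : 0 ≤ H := hh0.trans hhH
        gcongr

theorem injOn_natAbs_phaseBox_fiber (hM : 0 ≤ M) (hc : c ≠ 0) (hk : 2 ≤ k) (n : ℤ) :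
    Set.InjOn (fun x : ℤ × ℤ × ℤ × ℤ => (x.1.natAbs, x.2.1.natAbs, (x.2.2.1 - x.2.2.2).natAbs))
      {x | x ∈ phaseBox H L M N ∧ phase c j k x = n} := by
  rintro ⟨h, l, m₂, m₁⟩ ⟨hx, hn⟩ ⟨h', l', m₂', m₁'⟩ ⟨hx', hn'⟩ h_eq
  obtain ⟨⟨hh, -⟩, ⟨hl, -⟩, hm₁, hlt, -⟩ := mem_phaseBox.mp hx
  obtain ⟨⟨hh', -⟩, ⟨hl', -⟩, hm₁', hlt', -⟩ := mem_phaseBox.mp hx'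
  have hm₁0 : 0 ≤ m₁ := by exact_mod_cast (hM.trans_lt hm₁).le
  have hm₁0' : 0 ≤ m₁' := by exact_mod_cast (hM.trans_lt hm₁').le
  simp only [Prod.mk.injEq] at h_eq
  obtain rfl : h = h' := by omega
  obtain rfl : l = l' := by omega
  obtain ⟨d, rfl⟩ : ∃ d, m₂ = m₁ + d := ⟨m₂ - m₁, by ring⟩
  obtain rfl : m₂' = m₁' + d := by omega
  have h_coeff : c * l * h ^ j ≠ 0 := by positivity
  have h_pow : m₁ ^ k - (m₁ + d) ^ k = m₁' ^ k - (m₁' + d) ^ k :=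
    mul_left_cancel₀ h_coeff (hn.trans hn'.symm)
  obtain rfl : m₁ = m₁' := (strictMonoOn_add_pow_sub_pow (by omega : 0 < d) hk).injOn
    hm₁0 hm₁0' (by simpa using congrArg Neg.neg h_pow)
  rfl

theorem card_phase_fiber_le (hM : 0 ≤ M) (hc : c ≠ 0) (hj : j ≠ 0) (hk : 2 ≤ k) {n : ℤ}
    (hn : n ≠ 0) :
    ((phaseBox H L M N).filter fun x => phase c j k x = n).card ≤ n.natAbs.divisors.card ^ 3 := by
  have mem_divisors {a : ℤ} (ha : a ∣ n) : a.natAbs ∈ n.natAbs.divisors :=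
    Nat.mem_divisors.mpr ⟨Int.natAbs_dvd_natAbs.mpr ha, Int.natAbs_ne_zero.mpr hn⟩
  have h_inj := injOn_natAbs_phaseBox_fiber (H := H) (L := L) (N := N) (j := j) hM hc hk n
  calc ((phaseBox H L M N).filter fun x => phase c j k x = n).card
      ≤ (n.natAbs.divisors ×ˢ n.natAbs.divisors ×ˢ n.natAbs.divisors).card := by
        refine Finset.card_le_card_of_injOn _ ?_ (by simpa using h_inj)
        rintro ⟨h, l, m₂, m₁⟩ hx
        obtain ⟨-, rfl⟩ := Finset.mem_filter.mp hx
        have h_dvd : h ∣ phase c j k (h, l, m₂, m₁) :=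
          ((dvd_pow_self h hj).mul_left _).mul_right _
        have l_dvd : l ∣ phase c j k (h, l, m₂, m₁) :=
          ((dvd_mul_left l c).mul_right _).mul_right _
        have sub_dvd : m₂ - m₁ ∣ phase c j k (h, l, m₂, m₁) :=
          ((dvd_sub_comm).mp (sub_dvd_pow_sub_pow m₂ m₁ k)).mul_left _
        simp [-Nat.mem_divisors, mem_divisors h_dvd, mem_divisors l_dvd, mem_divisors sub_dvd]
    _ = n.natAbs.divisors.card ^ 3 := by
        simp only [Finset.card_product]
        ring

end PhaseBox

theorem exists_integral_norm_sq_sum_phaseBox_le {c : ℤ} (hc : c ≠ 0) {j k : ℕ} (hj : j ≠ 0)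
    (hk : 2 ≤ k) {δ : ℝ} (hδ : 0 < δ) :
    ∃ C > (0 : ℝ), ∀ H L M N : ℝ, 0 ≤ H → 0 ≤ L → 0 ≤ M → 0 ≤ N →
      ∫ α in (0 : ℝ)..1, ‖∑ x ∈ phaseBox H L M N, eC (α * phase c j k x)‖ ^ 2 ≤
        C * (L * H ^ j * N ^ k) ^ δ * (H * L * N ^ 2) := by
  obtain ⟨D, hD, h_div⟩ := exists_card_divisors_le_mul_rpow (by positivity : 0 < δ / 3)
  refine ⟨D ^ 3 * |(c : ℝ)| ^ δ, by positivity, fun H L M N hH hL hM hN => ?_⟩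
  set T : ℝ := L * H ^ j * N ^ k
  have hT : 0 ≤ T := by positivity
  have h_fiber : ∀ x ∈ phaseBox H L M N,
      (((phaseBox H L M N).filter fun y => phase c j k y = phase c j k x).card : ℝ) ≤
        D ^ 3 * |(c : ℝ)| ^ δ * T ^ δ := by
    intro x hx
    have hn : phase c j k x ≠ 0 := phase_ne_zero hM hc (by omega) hx
    calc (((phaseBox H L M N).filter fun y => phase c j k y = phase c j k x).card : ℝ)
        ≤ ((phase c j k x).natAbs.divisors.card : ℝ) ^ 3 := by
          exact_mod_cast card_phase_fiber_le hM hc hj hk hn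
      _ ≤ (D * ((phase c j k x).natAbs : ℝ) ^ (δ / 3)) ^ 3 := by
          gcongr
          exact h_div _ (Int.natAbs_ne_zero.mpr hn)
      _ ≤ (D * (|(c : ℝ)| * T) ^ (δ / 3)) ^ 3 := by
          gcongr
          exact natAbs_phase_le hM hx
      _ = D ^ 3 * |(c : ℝ)| ^ δ * T ^ δ := by
          rw [mul_pow, ← Real.rpow_mul_natCast (by positivity), Nat.cast_ofNat,
            div_mul_cancel₀ δ three_ne_zero, Real.mul_rpow (abs_nonneg _) hT, mul_assoc]
  exact (integral_norm_sq_sum_eC_le _ _ h_fiber).trans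
    (mul_le_mul_of_nonneg_left (card_phaseBox_le hH hL hM hN) (by positivity))

theorem exists_integral_norm_sq_E0_le (θ : ℝ) {δ : ℝ} (hδ : 0 < δ) :
    ∃ C > (0 : ℝ), ∀ P : ℝ, 0 < P → ∀ R : ℝ, 0 ≤ R →
      ∫ α in (0 : ℝ)..1, ‖E0 P θ R α‖ ^ 2 ≤
        C * (P ^ (4 - 4 * θ) * R ^ 8) ^ δ * (P * (P / (P ^ θ) ^ 4) * (P ^ θ * R) ^ 2) := by
  obtain ⟨C, hC, h_mean⟩ := exists_integral_norm_sq_sum_phaseBox_le (c := 8) (by norm_num)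
    (j := 3) (by norm_num) (k := 8) (by norm_num) hδ
  refine ⟨2 * C * 2 ^ δ, by positivity, fun P hP R hR => ?_⟩
  have h_size : 2 * P * (P / (P ^ θ) ^ 4) ^ 3 * (P ^ θ * R) ^ 8 =
      2 * (P ^ (4 - 4 * θ) * R ^ 8) := by
    have h_exp : P ^ (4 - 4 * θ) = P ^ 4 / (P ^ θ) ^ 4 := by
      rw [Real.rpow_sub hP, mul_comm 4 θ, ← Real.rpow_mul_natCast hP.le]
      norm_cast
    rw [h_exp]
    field_simp
  simp_rw [E0_eq_sum_phaseBox]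
  refine (h_mean _ _ _ _ (by positivity) (by positivity) (by positivity)
    (by positivity)).trans_eq ?_
  rw [h_size, Real.mul_rpow zero_le_two (by positivity)]
  ring

theorem stmt3_general (θ : ℝ) :
    ∀ ε > (0 : ℝ), ∃ η > (0 : ℝ), ∃ C > (0 : ℝ),
      ∀ P : ℝ, 1 ≤ P → ∀ R : ℝ, 0 ≤ R → R ≤ P ^ η →
        (∫ α in (0 : ℝ)..1, ‖E0 P θ R α‖ ^ 2)
          ≤ C * P ^ (1 + ε) * (P / (P ^ θ) ^ 4) * (P ^ θ) ^ 2 := by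
  intro ε hε
  set A : ℝ := 4 + 4 * |θ| + 2 * ε
  have hA0 : 0 < A := by positivity
  obtain ⟨C, hC, h_mean⟩ :=
    exists_integral_norm_sq_E0_le θ (by positivity : 0 < ε / (2 * A))
  refine ⟨ε / 4, by positivity, C, hC, fun P hP R hR hRP => ?_⟩
  have hP0 : 0 < P := by positivity
  have h_size : P ^ (4 - 4 * θ) * R ^ 8 ≤ P ^ A := calc
    P ^ (4 - 4 * θ) * R ^ 8 ≤ P ^ (4 - 4 * θ) * (P ^ (ε / 4)) ^ 8 := by gcongr
    _ = P ^ (4 - 4 * θ + 2 * ε) := by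
      rw [← Real.rpow_mul_natCast hP0.le, ← Real.rpow_add hP0]
      ring_nf
    _ ≤ P ^ A := by
      gcongr
      linarith [neg_abs_le θ]
  refine (h_mean P hP0 R hR).trans ?_
  calc C * (P ^ (4 - 4 * θ) * R ^ 8) ^ (ε / (2 * A)) *
        (P * (P / (P ^ θ) ^ 4) * (P ^ θ * R) ^ 2)
      ≤ C * (P ^ A) ^ (ε / (2 * A)) *
          (P * (P / (P ^ θ) ^ 4) * (P ^ θ * P ^ (ε / 4)) ^ 2) := by gcongr
    _ = C * (P ^ (1 : ℝ) * P ^ (ε / 2) * P ^ (ε / 2)) * (P / (P ^ θ) ^ 4) * (P ^ θ) ^ 2 := by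
      rw [← Real.rpow_mul hP0.le, mul_pow, ← Real.rpow_mul_natCast hP0.le (ε / 4), Real.rpow_one]
      have h_exp₁ : A * (ε / (2 * A)) = ε / 2 := by field_simp
      have h_exp₂ : ε / 4 * (2 : ℕ) = ε / 2 := by push_cast; ring
      rw [h_exp₁, h_exp₂]
      ring
    _ = C * P ^ (1 + ε) * (P / (P ^ θ) ^ 4) * (P ^ θ) ^ 2 := by
      rw [← Real.rpow_add hP0, ← Real.rpow_add hP0, add_assoc, add_halves]

theorem stmt3 (θ : ℝ) (hθ0 : 0 ≤ θ) (hθ1 : θ ≤ 1 / 4) :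
    ∀ ε > (0 : ℝ), ∃ η > (0 : ℝ), ∃ C > (0 : ℝ),
      ∀ P : ℝ, 2 ≤ P → ∀ R : ℝ, 1 ≤ R → R ≤ P ^ η →
        (∫ α in (0:ℝ)..1, ‖E0 P θ R α‖ ^ 2)
          ≤ C * P ^ ((1 : ℝ) + ε) * (P / (P ^ θ) ^ 4) * (P ^ θ) ^ 2 := by
  exact fun ε hε => (stmt3_general θ ε hε).imp fun _ ⟨hη, C, hC, h⟩ => ⟨hη, C, hC,
    fun P hP R hR => h P (one_le_two.trans hP) R (zero_le_one.trans hR)⟩
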